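/- arXiv:2303.04375 — 3 statements merged into one kernel-verified Lean document; each statement's English description precedes it below -/
import Mathlib

section
/- Let J be a finite index set, for each j ∈ J let K_j be a finite index set, and for each j ∈ J and k ∈ K_j let L_{jk} be a nonempty finite index set. Let x^LB, x^UB ∈ ℝⁿ. Suppose the point (x, u, v, y, w) — with x ∈ ℝⁿ, u_j ∈ ℝⁿ for j ∈ J, v_{jkl} ∈ ℝⁿ, y_j ∈ ℝ with 0 ≤ y_j ≤ 1, and w_{jkl} ∈ ℝ with 0 ≤ w_{jkl} ≤ 1 — satisfies the continuous relaxation of the hull reformulation of the 2-level nested GDP (for a single outer disjunction): (i) Σ_{j∈J} u_j = x; (ii) Σ_{l∈L_{jk}} v_{jkl} = u_j for all j ∈ J, k ∈ K_j; (iii) y_j·x^LB ≤ u_j ≤ y_j·x^UB componentwise for all j; (iv) w_{jkl}·x^LB ≤ v_{jkl} ≤ w_{jkl}·x^UB componentwise for all j, k, l; (v) Σ_{j∈J} y_j = 1; (vi) Σ_{l∈L_{jk}} w_{jkl} = y_j for all j, k. Then, defining the slack variables w⁰_{jk} := 1 − y_j and v⁰_{jk} := x − u_j, the point satisfies every constraint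 of the continuous relaxation of the hull reformulation of the equivalent single-level GDP that is not already among (i)–(vi), namely: v⁰_{jk} + Σ_{l∈L_{jk}} v_{jkl} = x for all j, k; w⁰_{jk}·x^LB ≤ v⁰_{jk} ≤ w⁰_{jk}·x^UB componentwise for all j, k; w⁰_{jk} + Σ_{l∈L_{jk}} w_{jkl} = 1 for all j, k; and 0 ≤ w⁰_{jk} ≤ 1 for all j, k. Consequently the feasible region of the continuous relaxation of the hull reformulation of the nested GDP is contained in that of its equivalent single-level GDP representation (Theorem 1, 2-level case). -/
/-! Both slack quantities are sums over the other outer disjuncts: `x - u j = ∑ i ≠ j, u i` and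
`1 - y j = ∑ i ≠ j, y i`. Adding up the bounds `y i • xLB ≤ u i ≤ y i • xUB` over `i ≠ j`
therefore gives the bounds on the slack copy `x - u j`. -/

theorem sum_sub_apply_le_sum_sub_apply
    {ι M : Type*} [AddCommGroup M] [PartialOrder M] [IsOrderedAddMonoid M]
    {s : Finset ι} {f g : ι → M} {j : ι} (hj : j ∈ s) (hfg : ∀ i ∈ s, i ≠ j → f i ≤ g i) :
    ∑ i ∈ s, f i - f j ≤ ∑ i ∈ s, g i - g j := by
  classical
  rw [← Finset.sum_erase_eq_sub hj, ← Finset.sum_erase_eq_sub hj]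
  exact Finset.sum_le_sum fun i hi =>
    hfg i (Finset.mem_of_mem_erase hi) (Finset.ne_of_mem_erase hi)

theorem nested_hull_subset_equivalent_hull_general
    {R E : Type*} [Ring R] [PartialOrder R] [IsOrderedAddMonoid R]
    [AddCommGroup E] [PartialOrder E] [IsOrderedAddMonoid E] [Module R E]
    {J : Type*} [Fintype J] {K : J → Type*} {L : ∀ j, K j → Type*} [∀ j k, Fintype (L j k)]
    {xLB xUB x : E} {u : J → E} {v : ∀ j, ∀ k : K j, L j k → E}
    {y : J → R} {w : ∀ j, ∀ k : K j, L j k → R}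
    (y_nonneg : ∀ j, 0 ≤ y j)
    (sum_u : ∑ j, u j = x) (sum_v : ∀ j (k : K j), ∑ l, v j k l = u j)
    (u_bounds : ∀ j, y j • xLB ≤ u j ∧ u j ≤ y j • xUB)
    (sum_y : ∑ j, y j = 1) (sum_w : ∀ j (k : K j), ∑ l, w j k l = y j)
    (j : J) (k : K j) :
    ((x - u j) + ∑ l, v j k l = x) ∧
    ((1 - y j) • xLB ≤ x - u j ∧ x - u j ≤ (1 - y j) • xUB) ∧
    ((1 - y j) + ∑ l, w j k l = 1) ∧
    (0 ≤ 1 - y j ∧ 1 - y j ≤ 1) := by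
  have hj : j ∈ Finset.univ := Finset.mem_univ j
  have y_le_one : y j ≤ 1 :=
    sum_y ▸ Finset.single_le_sum (fun i _ => y_nonneg i) hj
  have slack_bounds : (1 - y j) • xLB ≤ x - u j ∧ x - u j ≤ (1 - y j) • xUB := by
    simp only [← sum_u, ← sum_y, sub_smul, Finset.sum_smul]
    exact ⟨sum_sub_apply_le_sum_sub_apply hj fun i _ _ => (u_bounds i).1,
      sum_sub_apply_le_sum_sub_apply hj fun i _ _ => (u_bounds i).2⟩
  refine ⟨?_, slack_bounds, ?_, sub_nonneg.mpr y_le_one, sub_le_self 1 (y_nonneg j)⟩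
  · rw [sum_v, sub_add_cancel]
  · rw [sum_w, sub_add_cancel]

/-- Theorem 1 (2-level case), feasibility part: any point of the continuous
relaxation of the hull reformulation of the 2-level nested GDP, augmented with
the slack variables `w⁰_{jk} = 1 - y j` and `v⁰_{jk} = x - u j`, satisfies all
the additional constraints of the continuous relaxation of the hull
reformulation of the equivalent single-level GDP. -/
theorem nested_hull_subset_equivalent_hull
    {n : ℕ} {J : Type*} [Fintype J]
    {K : J → Type*} [∀ j, Fintype (K j)]
    {L : ∀ j, K j → Type*} [∀ j k, Fintype (L j k)] [∀ j k, Nonempty (L j k)]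
    (xLB xUB : Fin n → ℝ)
    (x : Fin n → ℝ) (u : J → Fin n → ℝ)
    (v : ∀ j, ∀ k : K j, L j k → Fin n → ℝ)
    (y : J → ℝ) (w : ∀ j, ∀ k : K j, L j k → ℝ)
    (hy0 : ∀ j, 0 ≤ y j) (hy1 : ∀ j, y j ≤ 1)
    (hw0 : ∀ j k l, 0 ≤ w j k l) (hw1 : ∀ j k l, w j k l ≤ 1)
    (h1 : ∑ j, u j = x)
    (h2 : ∀ j (k : K j), ∑ l, v j k l = u j)
    (h3 : ∀ j, y j • xLB ≤ u j ∧ u j ≤ y j • xUB)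
    (h4 : ∀ j (k : K j) (l : L j k), w j k l • xLB ≤ v j k l ∧ v j k l ≤ w j k l • xUB)
    (h5 : ∑ j, y j = 1)
    (h6 : ∀ j (k : K j), ∑ l, w j k l = y j) :
    ∀ j (k : K j),
      ((x - u j) + ∑ l, v j k l = x) ∧
      ((1 - y j) • xLB ≤ x - u j ∧ x - u j ≤ (1 - y j) • xUB) ∧
      ((1 - y j) + ∑ l, w j k l = 1) ∧
      (0 ≤ 1 - y j ∧ 1 - y j ≤ 1) :=
  nested_hull_subset_equivalent_hull_general hy0 h1 h2 h3 h5 h6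
end

section
/- Let J be a finite index set, for each j ∈ J let K_j be a finite index set, and for each j, k let L_{jk} be a nonempty finite index set. Let x ∈ ℝⁿ, let h_{jkl} : ℝⁿ → ℝ be arbitrary functions, and let m_{jkl}, m'_{jkl} ∈ ℝ satisfy m'_{jkl} ≤ m_{jkl}; set M'_{jkl} := m_{jkl} − m'_{jkl}. Let y_j ∈ [0,1] and w_{jkl} ∈ [0,1] satisfy w_{jkl} ≥ 0 and Σ_{l∈L_{jk}} w_{jkl} = y_j for all j, k. If the nested Big-M constraints h_{jkl}(x) ≤ m'_{jkl}·(1 − w_{jkl}) + M'_{jkl}·(1 − y_j) hold for all j, k, l, then the single-level Big-M constraints h_{jkl}(x) ≤ m_{jkl}·(1 − w_{jkl}) hold for all j, k, l. Consequently, since all other constraints of the two relaxations coincide, the feasible region of the continuous relaxation of the Big-M reformulation of the 2-level nested GDP (with tight M values, for which m'_{jkl} ≤ m_{jkl}) is contained in that of the Big-M reformulation of its equivalent single-level GDP representation (Theorem 2, 2-level case). -/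
theorem mul_add_sub_mul_le_mul {R : Type*} [Ring R] [PartialOrder R] [IsOrderedRing R]
    {a b u v : R} (hba : b ≤ a) (hvu : v ≤ u) : b * u + (a - b) * v ≤ a * u :=
  calc b * u + (a - b) * v
    _ ≤ b * u + (a - b) * u := by gcongr
    _ = a * u := by rw [← add_mul, add_sub_cancel]

/- `hwy` relaxes the implication from an inner disjunct being selected to its parent being selected;
the linking constraint `∑ l, w j k l = y j` enforces it when `w` is nonnegative. -/
theorem nested_bigM_subset_equivalent_bigM_general
    {R : Type*} [Ring R] [PartialOrder R] [IsOrderedRing R] {X J : Type*}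
    {K : J → Type*} {L : ∀ j, K j → Type*}
    (x : X) (h : ∀ j, ∀ k : K j, L j k → X → R)
    (m m' : ∀ j, ∀ k : K j, L j k → R)
    (hmm : ∀ j (k : K j) (l : L j k), m' j k l ≤ m j k l)
    (y : J → R) (w : ∀ j, ∀ k : K j, L j k → R)
    (hwy : ∀ j (k : K j) (l : L j k), w j k l ≤ y j)
    (hnested : ∀ j (k : K j) (l : L j k),
      h j k l x ≤ m' j k l * (1 - w j k l) + (m j k l - m' j k l) * (1 - y j)) :
    ∀ j (k : K j) (l : L j k), h j k l x ≤ m j k l * (1 - w j k l) := fun j k l =>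
  (hnested j k l).trans <|
    mul_add_sub_mul_le_mul (hmm j k l) (sub_le_sub_left (hwy j k l) 1)

/-- Theorem 2 (2-level case): with tight M values (`m' ≤ m` and
`M' = m - m'`), every point of the continuous relaxation of the Big-M
reformulation of the 2-level nested GDP satisfies the Big-M constraints of the
equivalent single-level GDP. -/
theorem nested_bigM_subset_equivalent_bigM
    {n : ℕ} {J : Type*} [Fintype J]
    {K : J → Type*} [∀ j, Fintype (K j)]
    {L : ∀ j, K j → Type*} [∀ j k, Fintype (L j k)] [∀ j k, Nonempty (L j k)]
    (x : Fin n → ℝ)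
    (h : ∀ j, ∀ k : K j, L j k → (Fin n → ℝ) → ℝ)
    (m m' : ∀ j, ∀ k : K j, L j k → ℝ)
    (hmm : ∀ j (k : K j) (l : L j k), m' j k l ≤ m j k l)
    (y : J → ℝ) (w : ∀ j, ∀ k : K j, L j k → ℝ)
    (hy0 : ∀ j, 0 ≤ y j) (hy1 : ∀ j, y j ≤ 1)
    (hw0 : ∀ j (k : K j) (l : L j k), 0 ≤ w j k l)
    (hw1 : ∀ j (k : K j) (l : L j k), w j k l ≤ 1)
    (hlink : ∀ j (k : K j), ∑ l, w j k l = y j)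
    (hnested : ∀ j (k : K j) (l : L j k),
      h j k l x ≤ m' j k l * (1 - w j k l) + (m j k l - m' j k l) * (1 - y j)) :
    ∀ j (k : K j) (l : L j k), h j k l x ≤ m j k l * (1 - w j k l) := by
  have hwy j (k : K j) (l : L j k) : w j k l ≤ y j :=
    hlink j k ▸ Finset.single_le_sum (fun i _ => hw0 j k i) (Finset.mem_univ l)
  exact nested_bigM_subset_equivalent_bigM_general x h m m' hmm y w hwy hnested
end

section
/- Let J be a finite index set, for each j ∈ J let K_j be a finite index set, and for each j, k let L_{jk} be a nonempty finite index set. Let x^LB, x^UB ∈ ℝⁿ, let X := {x ∈ ℝⁿ : x^LB ≤ x ≤ x^UB} (componentwise), and let G_j ⊆ ℝⁿ and H_{jkl} ⊆ ℝⁿ be arbitrary sets. Define the feasible set of the 2-level nested GDP as F₁ := {x ∈ X : ∃ j ∈ J, x ∈ G_j and ∀ k ∈ K_j, ∃ l ∈ L_{jk}, x ∈ H_{jkl}}, and the feasible set of the equivalent single-level GDP as F₂ := {x ∈ X : ∃ Y : J → Bool and W assigning a Boolean to each triple (j, k, l) with l ∈ L_{jk} ∪ {slack}, such that exactly one j ∈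 J has Y_j = true; for each j ∈ J and k ∈ K_j exactly one element of L_{jk} ∪ {slack} has W true; for each j, k, the number of l ∈ L_{jk} (excluding the slack) with W_{jkl} = true equals 1 if Y_j = true and 0 otherwise; Y_j = true implies x ∈ G_j; W_{jkl} = true with l ∈ L_{jk} implies x ∈ H_{jkl}; and W_{jk,slack} = true implies x ∈ X}. Then F₁ = F₂; i.e., the equivalent single-level GDP is logically equivalent to the nested GDP (they have the same feasible region in x). -/
/-!
The outer indicators single out one disjunct `j₀`, and the indicators of an extracted disjunction
single out one element of `Option (L j k)`. The linking rule says that this element is a genuine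
disjunct when `j = j₀` and the slack otherwise. So a Boolean assignment obeying the rules amounts
to a choice of `j₀` and of one inner disjunct for every `k : K j₀`, which is a witness for the
nested disjunction.
-/

/-- A two-level nested generalized disjunctive program (GDP) on an arbitrary space `α`, reduced to
its constraint sets: outer disjuncts are indexed by `J`, the `j`-th one contains the inner
disjunctions indexed by `K j`, and `L j k` indexes the disjuncts of the `k`-th of these. -/
structure NestedGDP (α : Type*) {J : Type*} {K : J → Type*} (L : ∀ j, K j → Type*) where
  /-- The region cut out by the variable bounds. -/
  region : Set α
  /-- The constraint set of an outer disjunct, without its inner disjunctions. -/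
  outer : J → Set α
  inner : ∀ j, ∀ k : K j, L j k → Set α

/-- The logical rules of the equivalent single-level GDP on the indicators `Y` of the outer
disjuncts and `W` of the extracted disjunctions, whose slack disjunct is `none`. Selected disjuncts
are counted by `Set.encard`, so that the index types may be infinite. -/
structure IsDisjunctSelection {J : Type*} {K : J → Type*} {L : ∀ j, K j → Type*}
    (Y : J → Bool) (W : ∀ j, ∀ k : K j, Option (L j k) → Bool) : Prop where
  encard_outer : {j | Y j = true}.encard = 1
  encard_extracted : ∀ j k, {o | W j k o = true}.encard = 1
  encard_inner : ∀ j k, {l | W j k (some l) = true}.encard = if Y j = true then 1 else 0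

theorem encard_setOf_eq_natCast_iff_card_filter {ι : Type*} [Fintype ι] (p : ι → Prop)
    [DecidablePred p] (m : ℕ) :
    {i | p i}.encard = m ↔ (Finset.univ.filter p).card = m := by
  rw [← Finset.coe_filter_univ, Set.encard_coe_eq_coe_finsetCard, Nat.cast_inj]

theorem encard_setOf_some_eq {ι : Type*} (o : Option ι) :
    {i | some i = o}.encard = if o.isSome then 1 else 0 := by
  cases o <;> simp

section Selection

variable {J : Type*} {K : J → Type*} {L : ∀ j, K j → Type*}

theorem exists_option_family_of_forall_exists {p : ∀ j, ∀ k : K j, L j k → Prop} {j₀ : J}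
    (h : ∀ k, ∃ l, p j₀ k l) :
    ∃ s : ∀ j, ∀ k : K j, Option (L j k),
      (∀ j k, (s j k).isSome ↔ j = j₀) ∧ ∀ j k l, some l = s j k → p j k l := by
  have pointwise : ∀ j (k : K j), ∃ o : Option (L j k),
      (o.isSome ↔ j = j₀) ∧ ∀ l, some l = o → p j k l := by
    intro j k
    by_cases hj : j = j₀
    · subst hj
      obtain ⟨l, hl⟩ := h k
      exact ⟨some l, by simp, by simpa using hl⟩
    · exact ⟨none, by simp [hj], by simp⟩
  choose s hs_isSome hs using pointwise
  exact ⟨s, hs_isSome, hs⟩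

namespace IsDisjunctSelection

variable {Y : J → Bool} {W : ∀ j, ∀ k : K j, Option (L j k) → Bool}

theorem of_option_family [DecidableEq J] [∀ j k, DecidableEq (L j k)] {j₀ : J}
    {s : ∀ j, ∀ k : K j, Option (L j k)} (hs : ∀ j k, (s j k).isSome ↔ j = j₀) :
    IsDisjunctSelection (fun j => decide (j = j₀)) (fun j k o => decide (o = s j k)) where
  encard_outer := by simp
  encard_extracted j k := by simp
  encard_inner j k := by simp only [decide_eq_true_eq, encard_setOf_some_eq, hs]

theorem exists_outer (h : IsDisjunctSelection Y W) : ∃ j, Y j = true :=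
  Set.encard_ne_zero.mp (h.encard_outer ▸ one_ne_zero)

theorem exists_inner (h : IsDisjunctSelection Y W) {j : J} (hj : Y j = true) (k : K j) :
    ∃ l, W j k (some l) = true := by
  have count : {l | W j k (some l) = true}.encard = 1 := by rw [h.encard_inner, if_pos hj]
  exact Set.encard_ne_zero.mp (count ▸ one_ne_zero)

theorem iff_card [Fintype J] [∀ j k, Fintype (L j k)] :
    IsDisjunctSelection Y W ↔
      (Finset.univ.filter (fun j => Y j = true)).card = 1 ∧
      (∀ j k, (Finset.univ.filter (fun o => W j k o = true)).card = 1) ∧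
      ∀ j k, (Finset.univ.filter (fun l => W j k (some l) = true)).card =
        if Y j = true then 1 else 0 := by
  simp only [← encard_setOf_eq_natCast_iff_card_filter, Nat.cast_ite, Nat.cast_one, Nat.cast_zero]
  exact ⟨fun ⟨hY, hW, hYW⟩ => ⟨hY, hW, hYW⟩, fun ⟨hY, hW, hYW⟩ => ⟨hY, hW, hYW⟩⟩

end IsDisjunctSelection

end Selection

namespace NestedGDP

variable {α J : Type*} {K : J → Type*} {L : ∀ j, K j → Type*}

/-- The feasible region of a nested GDP, with disjunctions read as existence of a disjunct that
holds rather than through indicator variables. -/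
def feasibleSet (P : NestedGDP α L) : Set α :=
  {x | x ∈ P.region ∧ ∃ j, x ∈ P.outer j ∧ ∀ k, ∃ l, x ∈ P.inner j k l}

/-- The feasible region, in the original variable `x`, of the equivalent single-level GDP: every
selected disjunct is enforced, a slack disjunct imposing only the variable bounds. -/
def singleLevelFeasibleSet (P : NestedGDP α L) : Set α :=
  {x | x ∈ P.region ∧ ∃ (Y : J → Bool) (W : ∀ j, ∀ k : K j, Option (L j k) → Bool),
    IsDisjunctSelection Y W ∧
    (∀ j, Y j = true → x ∈ P.outer j) ∧
    (∀ j k l, W j k (some l) = true → x ∈ P.inner j k l) ∧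
    ∀ j k, W j k none = true → x ∈ P.region}

theorem feasibleSet_subset_singleLevelFeasibleSet (P : NestedGDP α L) :
    P.feasibleSet ⊆ P.singleLevelFeasibleSet := by
  classical
  rintro x ⟨hx, j₀, hj₀, hinner⟩
  obtain ⟨s, hs_isSome, hs⟩ :=
    exists_option_family_of_forall_exists (p := fun j k l => x ∈ P.inner j k l) hinner
  refine ⟨hx, _, _, .of_option_family hs_isSome, fun j hj => ?_, fun j k l hl => ?_,
    fun _ _ _ => hx⟩
  · exact of_decide_eq_true hj ▸ hj₀
  · exact hs j k l (of_decide_eq_true hl)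

theorem singleLevelFeasibleSet_subset_feasibleSet (P : NestedGDP α L) :
    P.singleLevelFeasibleSet ⊆ P.feasibleSet := by
  rintro x ⟨hx, Y, W, hsel, houter, hinner, -⟩
  obtain ⟨j, hj⟩ := hsel.exists_outer
  refine ⟨hx, j, houter j hj, fun k => ?_⟩
  obtain ⟨l, hl⟩ := hsel.exists_inner hj k
  exact ⟨l, hinner j k l hl⟩

end NestedGDP

theorem nested_eq_equivalent_single_level_general {α J : Type*} {K : J → Type*}
    {L : ∀ j, K j → Type*} (P : NestedGDP α L) :
    P.feasibleSet = P.singleLevelFeasibleSet :=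
  P.feasibleSet_subset_singleLevelFeasibleSet.antisymm P.singleLevelFeasibleSet_subset_feasibleSet

/-- The equivalent single-level GDP is logically equivalent to the 2-level
nested GDP: they have the same feasible region in `x`. The slack disjunct of
each extracted inner disjunction is modeled as `none : Option (L j k)`. -/
theorem nested_eq_equivalent_single_level
    {n : ℕ} {J : Type*} [Fintype J] [DecidableEq J]
    {K : J → Type*} [∀ j, Fintype (K j)]
    {L : ∀ j, K j → Type*} [∀ j k, Fintype (L j k)] [∀ j k, Nonempty (L j k)]
    (xLB xUB : Fin n → ℝ) (G : J → Set (Fin n → ℝ))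
    (H : ∀ j, ∀ k : K j, L j k → Set (Fin n → ℝ)) :
    {x : Fin n → ℝ | (xLB ≤ x ∧ x ≤ xUB) ∧
        ∃ j, x ∈ G j ∧ ∀ k : K j, ∃ l : L j k, x ∈ H j k l} =
    {x : Fin n → ℝ | (xLB ≤ x ∧ x ≤ xUB) ∧
        ∃ (Y : J → Bool) (W : ∀ j, ∀ k : K j, Option (L j k) → Bool),
          (Finset.univ.filter (fun j => Y j = true)).card = 1 ∧
          (∀ j (k : K j),
            (Finset.univ.filter (fun l : Option (L j k) => W j k l = true)).card = 1) ∧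
          (∀ j (k : K j),
            (Finset.univ.filter (fun l : L j k => W j k (some l) = true)).card =
              (if Y j = true then 1 else 0)) ∧
          (∀ j, Y j = true → x ∈ G j) ∧
          (∀ j (k : K j) (l : L j k), W j k (some l) = true → x ∈ H j k l) ∧
          (∀ j (k : K j), W j k none = true → (xLB ≤ x ∧ x ≤ xUB))} := by
  simpa only [NestedGDP.feasibleSet, NestedGDP.singleLevelFeasibleSet, Set.mem_Icc,
    IsDisjunctSelection.iff_card, and_assoc] using
    nested_eq_equivalent_single_level_general ⟨Set.Icc xLB xUB, G, H⟩
end
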